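/- Let α ∈ (1,2), T > 0, L > 0, and let f : [0,T] × ℝ → ℝ be continuous with |f(t,x) − f(t,y)| ≤ L|x − y| for all t and x, y. Let y₁, y₂ : [0,T] → ℝ be continuous and satisfy yₖ(t) = y_{k,0} + y_{k,1} t + (1/Γ(α)) ∫₀ᵗ (t−s)^{α−1} f(s, yₖ(s)) ds for k = 1, 2, where y_{1,0} = y_{2,0} and y_{1,1} < y_{2,1}. Suppose T* ∈ (0,T] is such that E_{α,α}(−L t^α) > 0 and E_{α,2}(−L t^α) > 0 for all t ∈ [0,T*]. Then y₁(t) < y₂(t) for all t ∈ (0,T*]. -/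

import Mathlib

/-- The two-parameter Mittag-Leffler function `E_{α,β}(z) = ∑ₖ zᵏ / Γ(αk + β)`. -/
noncomputable def mlE (α β z : ℝ) : ℝ := ∑' k : ℕ, z ^ k / Real.Gamma (α * k + β)

/-!
The difference `z = y₂ - y₁` satisfies `z = ct + I^α g`, where `c = y₂₁ - y₁₁ > 0`, `I^α` is the
Riemann–Liouville integral and `g = f(·, y₂) - f(·, y₁)`. Hence `z = ct + I^α h - L I^α z` with
`h = g + Lz`, and by the Lipschitz condition `h ≥ 0` wherever `z > 0`. Iterating this relation and
using the semigroup law `I^β I^γ = I^(β+γ)` yields the variation-of-constants formula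
`z(t) = c t E_{α,2}(-L t^α) + ∫₀ᵗ (t - s)^(α - 1) E_{α,α}(-L (t - s)^α) h(s) ds`.
Since `α > 1`, `I^α g = o(t)` at `0`, so `z > 0` on some `(0, δ)`. At a first later zero `t₀` of `z`
the integral would be nonnegative and the first term positive, contradicting `z(t₀) = 0`.
-/

open Set Filter MeasureTheory Topology Asymptotics
open ProbabilityTheory (beta)

section Integrals

theorem integral_rpow_mul_sub_rpow {β γ a : ℝ} (hβ : 0 < β) (hγ : 0 < γ) (ha : 0 < a) :
    ∫ x in 0..a, x ^ (β - 1) * (a - x) ^ (γ - 1) = a ^ (β + γ - 1) * beta β γ := by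
  have h_beta : Complex.betaIntegral β γ = (beta β γ : ℂ) := by
    rw [Complex.betaIntegral_eq_Gamma_mul_div _ _ (by simpa) (by simpa), beta,
      ← Complex.ofReal_add]
    simp only [Complex.Gamma_ofReal, Complex.ofReal_div, Complex.ofReal_mul]
  apply Complex.ofReal_injective
  calc ((∫ x in 0..a, x ^ (β - 1) * (a - x) ^ (γ - 1) : ℝ) : ℂ)
      = ∫ x in 0..a, (x : ℂ) ^ ((β : ℂ) - 1) * ((a : ℂ) - x) ^ ((γ : ℂ) - 1) := by
        rw [← intervalIntegral.integral_ofReal]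
        refine intervalIntegral.integral_congr fun x hx ↦ ?_
        rw [uIcc_of_le ha.le] at hx
        simp only [Complex.ofReal_mul, Complex.ofReal_cpow hx.1,
          Complex.ofReal_cpow (sub_nonneg.2 hx.2), Complex.ofReal_sub, Complex.ofReal_one]
    _ = (a : ℂ) ^ ((β : ℂ) + γ - 1) * Complex.betaIntegral β γ :=
        Complex.betaIntegral_scaled _ _ ha
    _ = ((a ^ (β + γ - 1) * beta β γ : ℝ) : ℂ) := by
        rw [h_beta, Complex.ofReal_mul, Complex.ofReal_cpow ha.le]
        push_cast
        rfl

theorem integral_sub_rpow_mul_sub_rpow {β γ τ t : ℝ} (hβ : 0 < β) (hγ : 0 < γ) (hτ : τ < t) :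
    ∫ s in τ..t, (t - s) ^ (β - 1) * (s - τ) ^ (γ - 1) = (t - τ) ^ (β + γ - 1) * beta β γ := by
  rw [← integral_rpow_mul_sub_rpow hβ hγ (sub_pos.2 hτ)]
  have h_subst := intervalIntegral.integral_comp_sub_left (a := τ) (b := t)
    (fun x ↦ x ^ (β - 1) * (t - τ - x) ^ (γ - 1)) t
  simpa only [sub_self, sub_sub_sub_cancel_left] using h_subst

theorem intervalIntegral_swap_triangle {E : Type*} [NormedAddCommGroup E] [NormedSpace ℝ E]
    {a b : ℝ} (hab : a ≤ b) {k : ℝ → ℝ → E}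
    (hk : IntegrableOn k.uncurry ({p | p.2 ≤ p.1} ∩ Ioc a b ×ˢ Ioc a b)) :
    ∫ s in a..b, ∫ τ in a..s, k s τ = ∫ τ in a..b, ∫ s in τ..b, k s τ := by
  have h_meas : MeasurableSet {p : ℝ × ℝ | p.2 ≤ p.1} :=
    measurableSet_le measurable_snd measurable_fst
  have h_int : IntegrableOn (fun s τ ↦ {p : ℝ × ℝ | p.2 ≤ p.1}.indicator k.uncurry (s, τ)).uncurry
      (uIoc a b ×ˢ uIoc a b) := by
    rw [uIoc_of_le hab]
    exact (integrableOn_indicator_iff h_meas).2 hk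
  calc ∫ s in a..b, ∫ τ in a..s, k s τ
      = ∫ s in a..b, ∫ τ in a..b, {p : ℝ × ℝ | p.2 ≤ p.1}.indicator k.uncurry (s, τ) := by
        refine intervalIntegral.integral_congr fun s hs ↦ ?_
        rw [uIcc_of_le hab] at hs
        exact (intervalIntegral.integral_indicator (f := k s) hs).symm
    _ = ∫ τ in a..b, ∫ s in a..b, {p : ℝ × ℝ | p.2 ≤ p.1}.indicator k.uncurry (s, τ) :=
        intervalIntegral_intervalIntegral_swap h_int
    _ = ∫ τ in a..b, ∫ s in τ..b, k s τ := by
        simp only [intervalIntegral.integral_of_le hab]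
        refine setIntegral_congr_fun measurableSet_Ioc fun τ hτ ↦ ?_
        have h_Icc : Ioc a b ∩ Ici τ = Icc τ b := by
          ext s
          exact ⟨fun h ↦ ⟨h.2, h.1.2⟩, fun h ↦ ⟨⟨hτ.1.trans_le h.1, h.2⟩, h.1⟩⟩
        rw [intervalIntegral.integral_of_le hτ.2,
          ← integral_Icc_eq_integral_Ioc (f := fun s ↦ k s τ), ← h_Icc,
          ← setIntegral_indicator measurableSet_Ici]
        rfl

end Integrals

/-- The Riemann–Liouville fractional integral of order `β` based at `0`,
`(I^β u)(t) = Γ(β)⁻¹ ∫₀ᵗ (t - s)^(β - 1) u(s) ds`, in terms of which the Volterra equation of the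
Caputo problem reads `y = y₀ + y₁ t + I^α f(·, y)`. It is meant for `0 < β` and `0 ≤ t`. -/
noncomputable def riemannLiouville (β : ℝ) (u : ℝ → ℝ) (t : ℝ) : ℝ :=
  1 / Real.Gamma β * ∫ s in 0..t, (t - s) ^ (β - 1) * u s

namespace riemannLiouville

variable {β γ t : ℝ} {u v : ℝ → ℝ}

theorem intervalIntegrable_kernel_mul (hβ : 0 < β) (ht : 0 ≤ t) (hu : ContinuousOn u (Icc 0 t)) :
    IntervalIntegrable (fun s ↦ (t - s) ^ (β - 1) * u s) volume 0 t := by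
  have h_kernel : IntervalIntegrable (fun s ↦ (t - s) ^ (β - 1)) volume 0 t := by
    have h_rpow : IntervalIntegrable (fun x : ℝ ↦ x ^ (β - 1)) volume t 0 :=
      intervalIntegral.intervalIntegrable_rpow' (by linarith)
    simpa using h_rpow.comp_sub_left t
  exact h_kernel.mul_continuousOn (by rwa [uIcc_of_le ht])

theorem congr (ht : 0 ≤ t) (huv : EqOn u v (Icc 0 t)) :
    riemannLiouville β u t = riemannLiouville β v t := by
  unfold riemannLiouville
  congr 1
  refine intervalIntegral.integral_congr fun s hs ↦ ?_
  rw [uIcc_of_le ht] at hs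
  simp only [huv hs]

theorem add (hβ : 0 < β) (ht : 0 ≤ t) (hu : ContinuousOn u (Icc 0 t))
    (hv : ContinuousOn v (Icc 0 t)) :
    riemannLiouville β (fun s ↦ u s + v s) t = riemannLiouville β u t + riemannLiouville β v t := by
  simp only [riemannLiouville, mul_add]
  rw [intervalIntegral.integral_add (intervalIntegrable_kernel_mul hβ ht hu)
    (intervalIntegrable_kernel_mul hβ ht hv), mul_add]

theorem sub (hβ : 0 < β) (ht : 0 ≤ t) (hu : ContinuousOn u (Icc 0 t))
    (hv : ContinuousOn v (Icc 0 t)) :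
    riemannLiouville β (fun s ↦ u s - v s) t = riemannLiouville β u t - riemannLiouville β v t := by
  simp only [riemannLiouville, mul_sub]
  rw [intervalIntegral.integral_sub (intervalIntegrable_kernel_mul hβ ht hu)
    (intervalIntegrable_kernel_mul hβ ht hv), mul_sub]

theorem const_mul (c : ℝ) :
    riemannLiouville β (fun s ↦ c * u s) t = c * riemannLiouville β u t := by
  simp only [riemannLiouville, mul_left_comm _ c, intervalIntegral.integral_const_mul]

theorem const (hβ : 0 < β) (c t : ℝ) :
    riemannLiouville β (fun _ ↦ c) t = c * (t ^ β / Real.Gamma (β + 1)) := by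
  have h_subst := intervalIntegral.integral_comp_sub_left (a := 0) (b := t)
    (fun x ↦ x ^ (β - 1)) t
  rw [riemannLiouville, intervalIntegral.integral_mul_const, h_subst, sub_self, sub_zero,
    integral_rpow (Or.inl (by linarith)), sub_add_cancel, Real.zero_rpow hβ.ne',
    Real.Gamma_add_one hβ.ne']
  field_simp
  ring

theorem one_const (c t : ℝ) : riemannLiouville 1 (fun _ ↦ c) t = c * t := by
  rw [const one_pos, Real.rpow_one, one_add_one_eq_two, Real.Gamma_two, div_one]

theorem abs_le {M : ℝ} (hβ : 0 < β) (ht : 0 ≤ t) (hM : ∀ s ∈ Ioc 0 t, |u s| ≤ M) :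
    |riemannLiouville β u t| ≤ M * (t ^ β / Real.Gamma (β + 1)) := by
  have h_Gamma : 0 < 1 / Real.Gamma β := one_div_pos.2 (Real.Gamma_pos_of_pos hβ)
  rw [← const hβ, riemannLiouville, riemannLiouville, abs_mul, abs_of_pos h_Gamma,
    ← Real.norm_eq_abs (∫ s in 0..t, _)]
  refine mul_le_mul_of_nonneg_left (intervalIntegral.norm_integral_le_of_norm_le ht
    (Eventually.of_forall fun s hs ↦ ?_)
    (intervalIntegrable_kernel_mul hβ ht continuousOn_const)) h_Gamma.le
  have h_kernel : 0 ≤ (t - s) ^ (β - 1) := Real.rpow_nonneg (sub_nonneg.2 hs.2) _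
  rw [norm_mul, Real.norm_of_nonneg h_kernel]
  exact mul_le_mul_of_nonneg_left (hM s hs) h_kernel

theorem isBigO_rpow (hβ : 0 < β) (hu : u =O[𝓝[>] 0] fun _ ↦ (1 : ℝ)) :
    riemannLiouville β u =O[𝓝[>] 0] fun t ↦ t ^ β := by
  obtain ⟨M, hM⟩ := hu.bound
  obtain ⟨δ, hδ, hδM⟩ := mem_nhdsGT_iff_exists_Ioc_subset.1 hM
  refine IsBigO.of_bound (M / Real.Gamma (β + 1)) ?_
  filter_upwards [Ioc_mem_nhdsGT hδ] with t ht
  have h_bound : ∀ s ∈ Ioc 0 t, |u s| ≤ M := fun s hs ↦ by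
    simpa using hδM ⟨hs.1, hs.2.trans ht.2⟩
  rw [Real.norm_eq_abs, Real.norm_of_nonneg (Real.rpow_nonneg ht.1.le β), div_mul_eq_mul_div,
    ← mul_div_assoc']
  exact abs_le hβ ht.1.le h_bound

theorem isLittleO_id (hβ : 1 < β) (hu : u =O[𝓝[>] 0] fun _ ↦ (1 : ℝ)) :
    riemannLiouville β u =o[𝓝[>] 0] fun t ↦ t := by
  refine (isBigO_rpow (one_pos.trans hβ) hu).trans_isLittleO ?_
  have h_zero : Tendsto (fun t : ℝ ↦ t ^ (β - 1)) (𝓝[>] 0) (𝓝 0) := by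
    have h_cont := (Real.continuous_rpow_const (sub_pos.2 hβ).le).tendsto 0
    rw [Real.zero_rpow (sub_pos.2 hβ).ne'] at h_cont
    exact h_cont.mono_left nhdsWithin_le_nhds
  refine (((isLittleO_one_iff ℝ).2 h_zero).mul_isBigO (isBigO_refl (fun t ↦ t) _)).congr'
    ?_ (Eventually.of_forall fun t ↦ one_mul t)
  filter_upwards [self_mem_nhdsWithin] with t ht
  rw [← Real.rpow_add_one (mem_Ioi.1 ht).ne', sub_add_cancel]

theorem continuousOn {T : ℝ} (hβ : 1 ≤ β) (hT : 0 ≤ T) (hu : ContinuousOn u (Icc 0 T)) :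
    ContinuousOn (riemannLiouville β u) (Icc 0 T) := by
  set v := IccExtend hT ((Icc 0 T).domRestrict u)
  have hv : Continuous v := hu.domRestrict.Icc_extend'
  have h_rpow : Continuous fun x : ℝ ↦ x ^ (β - 1) := Real.continuous_rpow_const (by linarith)
  have h_cont : Continuous (riemannLiouville β v) := by
    refine continuous_const.mul
      (intervalIntegral.continuous_parametric_intervalIntegral_of_continuous
        (f := fun t s ↦ (t - s) ^ (β - 1) * v s) (s := id) ?_ continuous_id)
    exact (h_rpow.comp (continuous_fst.sub continuous_snd)).mul (hv.comp continuous_snd)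
  refine h_cont.continuousOn.congr fun t ht ↦ congr ht.1 fun s hs ↦ ?_
  exact (IccExtend_of_mem hT ((Icc 0 T).domRestrict u) ⟨hs.1, hs.2.trans ht.2⟩).symm

theorem comp (hβ : 1 ≤ β) (hγ : 1 ≤ γ) (ht : 0 ≤ t) (hu : ContinuousOn u (Icc 0 t)) :
    riemannLiouville β (riemannLiouville γ u) t = riemannLiouville (β + γ) u t := by
  have hβ_pos : 0 < β := one_pos.trans_le hβ
  have hγ_pos : 0 < γ := one_pos.trans_le hγ
  set k : ℝ → ℝ → ℝ := fun s τ ↦ (t - s) ^ (β - 1) * (s - τ) ^ (γ - 1) * u τ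
  have hk : ContinuousOn k.uncurry (Icc 0 t ×ˢ Icc 0 t) := by
    have hβ_rpow : Continuous fun x : ℝ ↦ x ^ (β - 1) := Real.continuous_rpow_const (by linarith)
    have hγ_rpow : Continuous fun x : ℝ ↦ x ^ (γ - 1) := Real.continuous_rpow_const (by linarith)
    refine ContinuousOn.mul (Continuous.continuousOn ?_)
      (hu.comp continuousOn_snd fun p hp ↦ hp.2)
    exact (hβ_rpow.comp (continuous_const.sub continuous_fst)).mul
      (hγ_rpow.comp (continuous_fst.sub continuous_snd))
  have h_swap : ∫ s in 0..t, ∫ τ in 0..s, k s τ = ∫ τ in 0..t, ∫ s in τ..t, k s τ :=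
    intervalIntegral_swap_triangle ht <|
      (hk.integrableOn_compact (isCompact_Icc.prod isCompact_Icc)).mono_set <|
        inter_subset_right.trans (prod_mono Ioc_subset_Icc_self Ioc_subset_Icc_self)
  have h_inner (τ : ℝ) (hτ : τ < t) :
      ∫ s in τ..t, k s τ = beta β γ * ((t - τ) ^ (β + γ - 1) * u τ) := by
    rw [intervalIntegral.integral_mul_const, integral_sub_rpow_mul_sub_rpow hβ_pos hγ_pos hτ]
    ring
  calc riemannLiouville β (riemannLiouville γ u) t
      = 1 / Real.Gamma β * (1 / Real.Gamma γ) * ∫ s in 0..t, ∫ τ in 0..s, k s τ := by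
        simp only [riemannLiouville, k, mul_assoc, intervalIntegral.integral_const_mul,
          mul_left_comm _ (1 / Real.Gamma γ)]
    _ = 1 / Real.Gamma β * (1 / Real.Gamma γ) *
          (beta β γ * ∫ τ in 0..t, (t - τ) ^ (β + γ - 1) * u τ) := by
        rw [h_swap, intervalIntegral.integral_congr_Ioo_of_le ht fun τ hτ ↦ h_inner τ hτ.2,
          intervalIntegral.integral_const_mul]
    _ = riemannLiouville (β + γ) u t := by
        have hβ_Gamma := (Real.Gamma_pos_of_pos hβ_pos).ne'
        have hγ_Gamma := (Real.Gamma_pos_of_pos hγ_pos).ne'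
        rw [riemannLiouville, beta]
        field_simp

end riemannLiouville

section MittagLeffler

variable {α β lam t : ℝ}

theorem summable_mlE (hα : 1 ≤ α) (hβ : 1 ≤ β) (z : ℝ) :
    Summable fun k : ℕ ↦ z ^ k / Real.Gamma (α * k + β) := by
  rw [← summable_nat_add_iff 1]
  refine Summable.of_norm_bounded
    ((summable_nat_add_iff 1).2 (Real.summable_pow_div_factorial |z|)) fun k ↦ ?_
  have h_arg : ((k + 1 : ℕ) : ℝ) + 1 ≤ α * ((k + 1 : ℕ) : ℝ) + β := by
    gcongr
    exact le_mul_of_one_le_left (Nat.cast_nonneg _) hα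
  have h_two : (2 : ℝ) ≤ ((k + 1 : ℕ) : ℝ) + 1 := by
    push_cast
    linarith [k.cast_nonneg (α := ℝ)]
  have h_Gamma : ((k + 1).factorial : ℝ) ≤ Real.Gamma (α * ((k + 1 : ℕ) : ℝ) + β) := by
    rw [← Real.Gamma_nat_eq_factorial]
    exact Real.Gamma_strictMonoOn_Ici.monotoneOn h_two (h_two.trans h_arg) h_arg
  have h_factorial : (0 : ℝ) < (k + 1).factorial := mod_cast (k + 1).factorial_pos
  rw [norm_div, norm_pow, Real.norm_eq_abs, Real.norm_of_nonneg (h_factorial.trans_le h_Gamma).le]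
  gcongr

theorem hasSum_mlE (hα : 1 ≤ α) (hβ : 1 ≤ β) (z : ℝ) :
    HasSum (fun k : ℕ ↦ z ^ k / Real.Gamma (α * k + β)) (mlE α β z) :=
  (summable_mlE hα hβ z).hasSum

theorem pow_mul_rpow_eq_rpow_mul_pow {r : ℝ} (hα : 0 ≤ α) (hβ : 0 ≤ β) (hr : 0 ≤ r) (k : ℕ) :
    lam ^ k * r ^ (α * k + β) = r ^ β * (lam * r ^ α) ^ k := by
  rw [Real.rpow_add_of_nonneg hr (by positivity) hβ, Real.rpow_mul hr, Real.rpow_natCast, mul_pow]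
  ring

/-- The integral operator `∫₀ᵗ (t - s)^(β - 1) E_{α,β}(lam (t - s)^α) u(s) ds`, which is the
Neumann series `∑ₖ lamᵏ I^(αk + β) u` in closed form. It is meant for `0 ≤ t`. -/
noncomputable def mittagLefflerIntegral (α β lam : ℝ) (u : ℝ → ℝ) (t : ℝ) : ℝ :=
  ∫ s in 0..t, (t - s) ^ (β - 1) * mlE α β (lam * (t - s) ^ α) * u s

theorem hasSum_mittagLefflerIntegral {u : ℝ → ℝ} (hα : 1 ≤ α) (hβ : 1 ≤ β) (ht : 0 ≤ t)
    (hu : ContinuousOn u (Icc 0 t)) :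
    HasSum (fun k : ℕ ↦ lam ^ k * riemannLiouville (α * k + β) u t)
      (mittagLefflerIntegral α β lam u t) := by
  have h_kernel := riemannLiouville.intervalIntegrable_kernel_mul (one_pos.trans_le hβ) ht hu
  have h_order (k : ℕ) : 0 < α * k + β := by positivity
  have h_term (k : ℕ) (s : ℝ) (hs : s ∈ Ioc 0 t) :
      lam ^ k * (1 / Real.Gamma (α * k + β) * ((t - s) ^ (α * k + β - 1) * u s)) =
        (t - s) ^ (β - 1) * u s * ((lam * (t - s) ^ α) ^ k / Real.Gamma (α * k + β)) := by
    have h_pow := pow_mul_rpow_eq_rpow_mul_pow (lam := lam) (one_pos.le.trans hα)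
      (sub_nonneg.2 hβ) (sub_nonneg.2 hs.2) k
    rw [← add_sub_assoc] at h_pow
    linear_combination (u s / Real.Gamma (α * k + β)) * h_pow
  simp only [riemannLiouville, ← intervalIntegral.integral_const_mul]
  refine intervalIntegral.hasSum_integral_of_dominated_convergence
    (fun k s ↦ ‖(t - s) ^ (β - 1) * u s‖ * ((|lam| * t ^ α) ^ k / Real.Gamma (α * k + β)))
    (fun k ↦ ?_) (fun k ↦ Eventually.of_forall fun s hs ↦ ?_)
    (Eventually.of_forall fun s _ ↦ (summable_mlE hα hβ _).mul_left _) ?_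
    (Eventually.of_forall fun s hs ↦ ?_)
  · rw [uIoc_of_le ht]
    exact ((riemannLiouville.intervalIntegrable_kernel_mul (h_order k) ht hu).1.const_mul
      _).const_mul _ |>.aestronglyMeasurable
  · rw [uIoc_of_le ht] at hs
    have h_sub : 0 ≤ t - s := sub_nonneg.2 hs.2
    have h_Gamma := Real.Gamma_pos_of_pos (h_order k)
    rw [h_term k s hs, norm_mul, norm_div, norm_pow, norm_mul, norm_mul, Real.norm_eq_abs lam,
      Real.norm_of_nonneg h_Gamma.le, Real.norm_of_nonneg (Real.rpow_nonneg h_sub α)]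
    gcongr
    linarith [hs.1]
  · simp only [tsum_mul_left]
    exact h_kernel.norm.mul_const _
  · rw [uIoc_of_le ht] at hs
    simp only [h_term _ s hs, mul_right_comm _ (mlE _ _ _)]
    exact (hasSum_mlE hα hβ _).mul_left _

theorem mittagLefflerIntegral_const (hα : 1 ≤ α) (hβ : 1 ≤ β) (ht : 0 ≤ t) (c : ℝ) :
    mittagLefflerIntegral α β lam (fun _ ↦ c) t = c * t ^ β * mlE α (β + 1) (lam * t ^ α) := by
  refine (hasSum_mittagLefflerIntegral hα hβ ht continuousOn_const).unique ?_
  have h_term (k : ℕ) : lam ^ k * riemannLiouville (α * k + β) (fun _ ↦ c) t =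
      c * t ^ β * ((lam * t ^ α) ^ k / Real.Gamma (α * k + (β + 1))) := by
    have h_pow := pow_mul_rpow_eq_rpow_mul_pow (lam := lam) (β := β) (one_pos.le.trans hα)
      (one_pos.le.trans hβ) ht k
    rw [riemannLiouville.const (by positivity), add_assoc]
    linear_combination (c / Real.Gamma (α * k + (β + 1))) * h_pow
  simp only [h_term]
  exact (hasSum_mlE hα (by linarith) _).mul_left _

theorem mittagLefflerIntegral_nonneg {u : ℝ → ℝ} (ht : 0 ≤ t)
    (hE : ∀ s ∈ Ioo 0 t, 0 ≤ mlE α β (lam * s ^ α)) (hu : ∀ s ∈ Ioo 0 t, 0 ≤ u s) :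
    0 ≤ mittagLefflerIntegral α β lam u t := by
  rw [mittagLefflerIntegral, intervalIntegral.integral_of_le ht, integral_Ioc_eq_integral_Ioo]
  refine setIntegral_nonneg measurableSet_Ioo fun s hs ↦ ?_
  have h_sub : 0 < t - s := sub_pos.2 hs.2
  exact mul_nonneg (mul_nonneg (Real.rpow_nonneg h_sub.le _)
    (hE _ ⟨h_sub, sub_lt_self t hs.1⟩)) (hu s hs)

end MittagLeffler

section Volterra

variable {α β γ lam t : ℝ} {z g h : ℝ → ℝ}

theorem volterra_eq_sum_add_remainder (hα : 1 ≤ α) (hβ : 1 ≤ β) (hγ : 1 ≤ γ) (ht : 0 ≤ t)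
    (hz : ContinuousOn z (Icc 0 t)) (hg : ContinuousOn g (Icc 0 t))
    (hh : ContinuousOn h (Icc 0 t))
    (h_eq : ∀ s ∈ Icc 0 t, z s = riemannLiouville β g s + riemannLiouville γ h s +
      lam * riemannLiouville α z s) (n : ℕ) :
    z t = ∑ k ∈ Finset.range (n + 1), (lam ^ k * riemannLiouville (α * k + β) g t +
        lam ^ k * riemannLiouville (α * k + γ) h t) +
      lam * (lam ^ n * riemannLiouville (α * n + α) z t) := by
  induction n with
  | zero => simpa using h_eq t ⟨ht, le_rfl⟩
  | succ n ih =>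
    have h_order : 1 ≤ α * n + α := le_add_of_nonneg_of_le (by positivity) hα
    have h_pos : 0 < α * n + α := one_pos.trans_le h_order
    have hg' := riemannLiouville.continuousOn hβ ht hg
    have hh' := riemannLiouville.continuousOn hγ ht hh
    have hz' := riemannLiouville.continuousOn hα ht hz
    have h_step : riemannLiouville (α * n + α) z t = riemannLiouville (α * n + α + β) g t +
        riemannLiouville (α * n + α + γ) h t + lam * riemannLiouville (α * n + α + α) z t := by
      rw [riemannLiouville.congr ht h_eq,
        riemannLiouville.add (u := fun s ↦ riemannLiouville β g s + riemannLiouville γ h s)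
          h_pos ht (hg'.add hh') (hz'.const_mul lam),
        riemannLiouville.add h_pos ht hg' hh', riemannLiouville.const_mul,
        riemannLiouville.comp h_order hβ ht hg, riemannLiouville.comp h_order hγ ht hh,
        riemannLiouville.comp h_order hα ht hz]
    rw [Finset.sum_range_succ, ih, h_step, Nat.cast_succ, mul_add_one]
    ring

theorem volterra_eq_mittagLefflerIntegral (hα : 1 ≤ α) (hβ : 1 ≤ β) (hγ : 1 ≤ γ) (ht : 0 ≤ t)
    (hz : ContinuousOn z (Icc 0 t)) (hg : ContinuousOn g (Icc 0 t))
    (hh : ContinuousOn h (Icc 0 t))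
    (h_eq : ∀ s ∈ Icc 0 t, z s = riemannLiouville β g s + riemannLiouville γ h s +
      lam * riemannLiouville α z s) :
    z t = mittagLefflerIntegral α β lam g t + mittagLefflerIntegral α γ lam h t := by
  have h_sum := ((hasSum_mittagLefflerIntegral (lam := lam) hα hβ ht hg).add
    (hasSum_mittagLefflerIntegral (lam := lam) hα hγ ht hh)).tendsto_sum_nat.comp
    (tendsto_add_atTop_nat 1)
  have h_remainder : Tendsto (fun n : ℕ ↦ lam * (lam ^ n * riemannLiouville (α * n + α) z t))
      atTop (𝓝 0) := by
    simpa using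
      (hasSum_mittagLefflerIntegral hα hα ht hz).summable.tendsto_atTop_zero.const_mul lam
  have h_lim := h_sum.add h_remainder
  rw [add_zero] at h_lim
  exact tendsto_nhds_unique (tendsto_const_nhds.congr
    (volterra_eq_sum_add_remainder hα hβ hγ ht hz hg hh h_eq)) h_lim

end Volterra

section Comparison

theorem pos_on_Ioc_of_pos_right_of_pos_on_Ioo {a b : ℝ} {z : ℝ → ℝ} (hz : ContinuousOn z (Icc a b))
    (h_right : ∀ᶠ t in 𝓝[>] a, 0 < z t)
    (h_step : ∀ t ∈ Ioc a b, (∀ s ∈ Ioo a t, 0 < z s) → 0 < z t) :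
    ∀ t ∈ Ioc a b, 0 < z t := by
  intro t ht
  by_contra! h_nonpos
  obtain ⟨δ, hδ, h_small⟩ := mem_nhdsGT_iff_exists_Ioo_subset.1 h_right
  have h_sub : Icc δ t ⊆ Icc a b := Icc_subset_Icc hδ.le ht.2
  have h_compact : IsCompact (Icc δ t ∩ z ⁻¹' Iic 0) :=
    isCompact_Icc.of_isClosed_subset
      ((hz.mono h_sub).preimage_isClosed_of_isClosed isClosed_Icc isClosed_Iic) inter_subset_left
  have hδt : δ ≤ t := not_lt.1 fun h_lt ↦ h_nonpos.not_gt (h_small ⟨ht.1, h_lt⟩)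
  obtain ⟨t₀, ⟨ht₀, h_zero⟩, h_least⟩ := h_compact.exists_isLeast ⟨t, ⟨hδt, le_rfl⟩, h_nonpos⟩
  have h_before : ∀ s ∈ Ioo a t₀, 0 < z s := fun s hs ↦ by
    by_contra! h_neg
    have hδs : δ ≤ s := not_lt.1 fun h_lt ↦ h_neg.not_gt (h_small ⟨hs.1, h_lt⟩)
    exact hs.2.not_ge (h_least ⟨⟨hδs, hs.2.le.trans ht₀.2⟩, h_neg⟩)
  exact (h_step t₀ ⟨hδ.trans_le ht₀.1, ht₀.2.trans ht.2⟩ h_before).not_ge h_zero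

variable {α c L T : ℝ} {z g : ℝ → ℝ}

theorem volterra_eventually_pos (hα : 1 < α) (hc : 0 < c) (hT : 0 < T)
    (hg : ContinuousOn g (Icc 0 T))
    (h_eq : ∀ t ∈ Icc 0 T, z t = c * t + riemannLiouville α g t) :
    ∀ᶠ t in 𝓝[>] 0, 0 < z t := by
  have h_bounded : g =O[𝓝[>] 0] fun _ ↦ (1 : ℝ) :=
    ((hg 0 ⟨le_rfl, hT.le⟩).mono_of_mem_nhdsWithin
      (Icc_mem_nhdsGT hT)).tendsto.isBigO_one ℝ
  filter_upwards [Ioc_mem_nhdsGT hT,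
    (riemannLiouville.isLittleO_id hα h_bounded).bound (half_pos hc)] with t ht h_small
  rw [Real.norm_eq_abs, Real.norm_of_nonneg ht.1.le] at h_small
  rw [h_eq t ⟨ht.1.le, ht.2⟩]
  linarith [(abs_le.1 h_small).1, mul_pos hc ht.1]

theorem volterra_mul_mlE_le (hα : 1 ≤ α) (hT : 0 ≤ T) (hz : ContinuousOn z (Icc 0 T))
    (hg : ContinuousOn g (Icc 0 T))
    (h_eq : ∀ s ∈ Icc 0 T, z s = c * s + riemannLiouville α g s)
    (h_lower : ∀ s ∈ Ioo 0 T, -(L * z s) ≤ g s)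
    (hE : ∀ s ∈ Ioo 0 T, 0 ≤ mlE α α (-L * s ^ α)) :
    c * T * mlE α 2 (-L * T ^ α) ≤ z T := by
  have h_forced : ∀ s ∈ Icc 0 T, z s = riemannLiouville 1 (fun _ ↦ c) s +
      riemannLiouville α (fun r ↦ g r + L * z r) s + -L * riemannLiouville α z s := by
    intro s hs
    have h_sub : Icc 0 s ⊆ Icc 0 T := Icc_subset_Icc_right hs.2
    rw [h_eq s hs, riemannLiouville.one_const, riemannLiouville.add (one_pos.trans_le hα) hs.1
      (hg.mono h_sub) ((hz.mono h_sub).const_mul L), riemannLiouville.const_mul]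
    ring
  rw [volterra_eq_mittagLefflerIntegral hα le_rfl hα hT hz continuousOn_const
      (hg.add (hz.const_mul L)) h_forced,
    mittagLefflerIntegral_const hα le_rfl hT, Real.rpow_one, one_add_one_eq_two]
  exact le_add_of_nonneg_right <| mittagLefflerIntegral_nonneg hT hE
    fun s hs ↦ neg_le_iff_add_nonneg.1 (h_lower s hs)

theorem volterra_pos (hα : 1 < α) (hc : 0 < c)
    (hz : ContinuousOn z (Icc 0 T)) (hg : ContinuousOn g (Icc 0 T))
    (h_eq : ∀ t ∈ Icc 0 T, z t = c * t + riemannLiouville α g t)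
    (h_lower : ∀ t ∈ Icc 0 T, 0 < z t → -(L * z t) ≤ g t)
    (hEα : ∀ t ∈ Ioo 0 T, 0 ≤ mlE α α (-L * t ^ α))
    (hE₂ : ∀ t ∈ Ioc 0 T, 0 < mlE α 2 (-L * t ^ α)) :
    ∀ t ∈ Ioc 0 T, 0 < z t := by
  rcases le_or_gt T 0 with hT | hT
  · simp [Ioc_eq_empty hT.not_gt]
  refine pos_on_Ioc_of_pos_right_of_pos_on_Ioo hz
    (volterra_eventually_pos hα hc hT hg h_eq) fun t ht h_before ↦ ?_
  have h_sub : Icc 0 t ⊆ Icc 0 T := Icc_subset_Icc_right ht.2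
  calc 0 < c * t * mlE α 2 (-L * t ^ α) := mul_pos (mul_pos hc ht.1) (hE₂ t ht)
    _ ≤ z t := volterra_mul_mlE_le hα.le ht.1.le (hz.mono h_sub) (hg.mono h_sub)
      (fun s hs ↦ h_eq s (h_sub hs))
      (fun s hs ↦ h_lower s (h_sub (Ioo_subset_Icc_self hs)) (h_before s hs))
      (fun s hs ↦ hEα s ⟨hs.1, hs.2.trans_le ht.2⟩)

end Comparison

theorem solutions_separate_equal_initial_value_general {α T L y₀ y₁₁ y₂₁ : ℝ} (hα : 1 < α)
    {f : ℝ → ℝ → ℝ} (hf_cont : ContinuousOn (fun p : ℝ × ℝ ↦ f p.1 p.2) (Icc 0 T ×ˢ univ))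
    (hf_mono : ∀ t ∈ Icc 0 T, Monotone fun x ↦ f t x + L * x)
    {y₁ y₂ : ℝ → ℝ} (hy₁_cont : ContinuousOn y₁ (Icc 0 T)) (hy₂_cont : ContinuousOn y₂ (Icc 0 T))
    (hy₁ : ∀ t ∈ Icc 0 T, y₁ t = y₀ + y₁₁ * t + riemannLiouville α (fun s ↦ f s (y₁ s)) t)
    (hy₂ : ∀ t ∈ Icc 0 T, y₂ t = y₀ + y₂₁ * t + riemannLiouville α (fun s ↦ f s (y₂ s)) t)
    (h_slope : y₁₁ < y₂₁)
    (hEα : ∀ t ∈ Ioo 0 T, 0 ≤ mlE α α (-L * t ^ α))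
    (hE₂ : ∀ t ∈ Ioc 0 T, 0 < mlE α 2 (-L * t ^ α)) :
    ∀ t ∈ Ioc 0 T, y₁ t < y₂ t := by
  have hf_comp {y : ℝ → ℝ} (hy : ContinuousOn y (Icc 0 T)) :
      ContinuousOn (fun s ↦ f s (y s)) (Icc 0 T) :=
    hf_cont.comp (continuousOn_id.prodMk hy) fun s hs ↦ ⟨hs, mem_univ _⟩
  have h_eq : ∀ t ∈ Icc 0 T, y₂ t - y₁ t =
      (y₂₁ - y₁₁) * t + riemannLiouville α (fun s ↦ f s (y₂ s) - f s (y₁ s)) t := by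
    intro t ht
    have h_sub : Icc 0 t ⊆ Icc 0 T := Icc_subset_Icc_right ht.2
    rw [hy₁ t ht, hy₂ t ht, riemannLiouville.sub (one_pos.trans hα) ht.1
      ((hf_comp hy₂_cont).mono h_sub) ((hf_comp hy₁_cont).mono h_sub)]
    ring
  have h_lower : ∀ t ∈ Icc 0 T, 0 < y₂ t - y₁ t →
      -(L * (y₂ t - y₁ t)) ≤ f t (y₂ t) - f t (y₁ t) := by
    intro t ht h_lt
    linarith [hf_mono t ht (sub_pos.1 h_lt).le]
  exact fun t ht ↦ sub_pos.1 <| volterra_pos hα (sub_pos.2 h_slope) (hy₂_cont.sub hy₁_cont)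
    ((hf_comp hy₂_cont).sub (hf_comp hy₁_cont)) h_eq h_lower hEα hE₂ t ht

theorem monotone_add_mul_of_abs_sub_le {φ : ℝ → ℝ} {L : ℝ}
    (hφ : ∀ x y, |φ x - φ y| ≤ L * |x - y|) : Monotone fun x ↦ φ x + L * x := by
  intro x y hxy
  have h_lip := (le_abs_self _).trans (hφ x y)
  rw [abs_sub_comm, abs_of_nonneg (sub_nonneg.2 hxy)] at h_lip
  linarith

/-- Separation theorem for solutions with identical initial values but different
initial slopes (Theorem 2.7 of the paper). -/
theorem solutions_separate_equal_initial_value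
    (α T Tstar L y₁₀ y₁₁ y₂₀ y₂₁ : ℝ) (hα₁ : 1 < α) (hα₂ : α < 2)
    (hT : 0 < T) (hL : 0 < L)
    (f : ℝ → ℝ → ℝ)
    (hf_cont : ContinuousOn (fun p : ℝ × ℝ => f p.1 p.2) (Set.Icc 0 T ×ˢ Set.univ))
    (hf_lip : ∀ t ∈ Set.Icc (0 : ℝ) T, ∀ x y : ℝ, |f t x - f t y| ≤ L * |x - y|)
    (y₁ y₂ : ℝ → ℝ)
    (hy₁cont : ContinuousOn y₁ (Set.Icc 0 T)) (hy₂cont : ContinuousOn y₂ (Set.Icc 0 T))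
    (hy₁ : ∀ t ∈ Set.Icc (0 : ℝ) T,
      y₁ t = y₁₀ + y₁₁ * t
        + (1 / Real.Gamma α) * ∫ s in (0 : ℝ)..t, (t - s) ^ (α - 1) * f s (y₁ s))
    (hy₂ : ∀ t ∈ Set.Icc (0 : ℝ) T,
      y₂ t = y₂₀ + y₂₁ * t
        + (1 / Real.Gamma α) * ∫ s in (0 : ℝ)..t, (t - s) ^ (α - 1) * f s (y₂ s))
    (h0 : y₁₀ = y₂₀) (h1 : y₁₁ < y₂₁)
    (hTstar : 0 < Tstar) (hTstarT : Tstar ≤ T)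
    (hposαα : ∀ t ∈ Set.Icc (0 : ℝ) Tstar, mlE α α (-(L * t ^ α)) > 0)
    (hposα2 : ∀ t ∈ Set.Icc (0 : ℝ) Tstar, mlE α 2 (-(L * t ^ α)) > 0) :
    ∀ t ∈ Set.Ioc (0 : ℝ) Tstar, y₁ t < y₂ t := by
  have h_sub : Set.Icc 0 Tstar ⊆ Set.Icc 0 T := Set.Icc_subset_Icc_right hTstarT
  subst h0
  exact solutions_separate_equal_initial_value_general hα₁
    (hf_cont.mono (Set.prod_mono h_sub subset_rfl))
    (fun t ht ↦ monotone_add_mul_of_abs_sub_le (hf_lip t (h_sub ht)))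
    (hy₁cont.mono h_sub) (hy₂cont.mono h_sub)
    (fun t ht ↦ hy₁ t (h_sub ht)) (fun t ht ↦ hy₂ t (h_sub ht)) h1
    (fun t ht ↦ neg_mul L _ ▸ (hposαα t (Set.Ioo_subset_Icc_self ht)).le)
    (fun t ht ↦ neg_mul L _ ▸ hposα2 t (Set.Ioc_subset_Icc_self ht))
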